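/- Let s ≥ 2 and n = 2s − 1. Let u₀, u₁, …, u_{s−1} and v₀, v₁, …, v_{s−1} be real numbers with u₀ ≥ u₁ ≥ … ≥ u_{s−1} and v₀ ≥ v₁ ≥ … ≥ v_{s−1}, and suppose there are indices i, j ∈ {0, 1, …, s−2} with j ≤ i such that u_i > u_{i+1} and v_j > v_{j+1}. Define the symmetric circulant matrices U = C(u₀, u₁, …, u_{s−1}, u_{s−1}, …, u₁) and V = C(v₀, v₁, …, v_{s−1}, v_{s−1}, …, v₁), and write their product as R = U V = C(r₀, r₁, …, r_{s−1}, r_{s−1}, …, r₁). Then, setting h* = min{ i + j, 2s − 3 − i − j }, the generating entries of R satisfy the strict chain r_{i−j} > r_{i−j+1} > … > r_{h*} > r_{h*+1}. -/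

import Mathlib

open Matrix Finset

/-- The circulant matrix `C(m₀,…,m_{n-1})` whose `(i,j)` entry is `m_{(j-i) mod n}`. -/
def Cmat {n : ℕ} (m : Fin n → ℝ) : Matrix (Fin n) (Fin n) ℝ :=
  Matrix.of fun i j => m (j - i)

/-- Generator of the symmetric circulant matrix `C(w₀,…,w_{s-1},…)`:
the entry at circular position `k` is `w_{min(k, n-k)}`. -/
def ringGen (n : ℕ) (w : ℕ → ℝ) : Fin n → ℝ :=
  fun k => w (min k.val (n - k.val))

/-! Let `r` be the convolution of the even functions `U = ringGen n u` and `V = ringGen n v` on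
`ℤ/n`. Shifting the summation variable gives
`r h - r (h + 1) = ∑ t, U (h - t) * (V t - V (t + 1))`,
and adding to this its image under the reflection `t ↦ -t - 1` gives
`2 * (r h - r (h + 1)) = ∑ t, (U (h - t) - U (h + 1 + t)) * (V t - V (t + 1))`.
Each summand is invariant under the reflection, so only residues `t = k` with `2 * k + 1 ≤ n`
matter. For these, `h - k` is at least as close to `0` on the circle as `h + 1 + k`, and `k` as
`k + 1`, so that both factors are nonnegative. At `t = j` both are positive as soon as `i`, `j`, `h`
satisfy the triangle inequalities and `i + j + h + 2 ≤ n`.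
-/

section CirculantConvolution

variable {G R : Type*} [AddCommGroup G]

theorem even_circulant_mulVec [Fintype G] [NonUnitalNonAssocSemiring R] {f g : G → R}
    (hf : f.Even) (hg : g.Even) : (circulant f *ᵥ g).Even := by
  intro x
  calc ∑ t, f (-x - t) * g t
      = ∑ t, f (-x - -t) * g (-t) := (Equiv.sum_comp (Equiv.neg G) _).symm
    _ = ∑ t, f (x - t) * g t := by
      refine sum_congr rfl fun t _ ↦ ?_
      rw [hg, ← neg_sub', hf]

theorem circulant_mulVec_sub_circulant_mulVec_add [Fintype G] [NonUnitalNonAssocRing R]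
    (f g : G → R) (a d : G) :
    (circulant f *ᵥ g) a - (circulant f *ᵥ g) (a + d) = ∑ t, f (a - t) * (g t - g (t + d)) := by
  have shift : (circulant f *ᵥ g) (a + d) = ∑ t, f (a - t) * g (t + d) := by
    calc ∑ t, f (a + d - t) * g t
        = ∑ t, f (a + d - (t + d)) * g (t + d) := (Equiv.sum_comp (Equiv.addRight d) _).symm
      _ = ∑ t, f (a - t) * g (t + d) := by simp only [add_sub_add_right_eq_sub]
  rw [shift]
  simp only [mul_sub, sum_sub_distrib]
  rfl

theorem even_sub_add_reflect [AddGroup R] {g : G → R} (hg : g.Even) (d t : G) :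
    g (-t - d) - g (-t - d + d) = -(g t - g (t + d)) := by
  rw [← neg_add', hg, neg_add', sub_add_cancel, hg, neg_sub]

theorem two_mul_circulant_mulVec_sub [Fintype G] [NonAssocRing R] (f : G → R) {g : G → R}
    (hg : g.Even) (a d : G) :
    2 * ((circulant f *ᵥ g) a - (circulant f *ᵥ g) (a + d)) =
      ∑ t, (f (a - t) - f (a + d + t)) * (g t - g (t + d)) := by
  have reflect : ∑ t, f (a - t) * (g t - g (t + d)) =
      -∑ t, f (a + d + t) * (g t - g (t + d)) := by
    rw [← Equiv.sum_comp ((Equiv.neg G).trans (Equiv.subRight d)), ← sum_neg_distrib]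
    refine sum_congr rfl fun t _ ↦ ?_
    have hat : a - (-t - d) = a + d + t := by abel
    simp only [Equiv.trans_apply, Equiv.neg_apply, Equiv.subRight_apply]
    rw [even_sub_add_reflect hg, hat, mul_neg]
  rw [two_mul, circulant_mulVec_sub_circulant_mulVec_add]
  nth_rw 2 [reflect]
  rw [← sub_eq_add_neg, ← sum_sub_distrib]
  simp only [sub_mul]

end CirculantConvolution

theorem antitoneOn_Iic_of_add_one_le {α : Type*} [Preorder α] {w : ℕ → α} {m : ℕ}
    (hw : ∀ k, k + 1 ≤ m → w (k + 1) ≤ w k) : AntitoneOn w (Set.Iic m) :=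
  antitoneOn_of_add_one_le Set.ordConnected_Iic fun k _ _ hk ↦ hw k hk

theorem Cmat_eq_circulant_of_even {n : ℕ} {f : Fin n → ℝ} (hf : f.Even) :
    Cmat f = circulant f :=
  Fin.circulant_isSymm_iff.mpr hf

section RingGen

open scoped Fin.NatCast Fin.CommRing

variable {n : ℕ} [NeZero n] {w : ℕ → ℝ} {h i k : ℕ}

theorem ringGen_natCast (w : ℕ → ℝ) (hk : k ≤ n) :
    ringGen n w (k : Fin n) = w (min k (n - k)) := by
  obtain rfl | hlt := hk.eq_or_lt
  · simp [ringGen]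
  · rw [ringGen, Fin.val_natCast, Nat.mod_eq_of_lt hlt]

theorem ringGen_even (n : ℕ) [NeZero n] (w : ℕ → ℝ) : (ringGen n w).Even := by
  intro x
  have hneg : -x = ((n - x.val : ℕ) : Fin n) := by
    rw [Nat.cast_sub x.isLt.le, Fin.natCast_self, Fin.cast_val_eq_self, zero_sub]
  rw [hneg, ringGen_natCast w (Nat.sub_le _ _), Nat.sub_sub_self x.isLt.le, min_comm, ringGen]

theorem ringGen_natCast_of_even {f : Fin n → ℝ} (hf : f.Even) :
    ringGen n (fun k ↦ f (k : Fin n)) = f := by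
  ext x
  rw [ringGen]
  obtain hmin | hmin := min_choice x.val (n - x.val)
  · rw [hmin, Fin.cast_val_eq_self]
  · rw [hmin, Nat.cast_sub x.isLt.le, Fin.natCast_self, Fin.cast_val_eq_self, zero_sub, hf]

theorem Cmat_ringGen_mul_Cmat_ringGen (u v : ℕ → ℝ) :
    Cmat (ringGen n u) * Cmat (ringGen n v) =
      Cmat (ringGen n fun k ↦ (circulant (ringGen n u) *ᵥ ringGen n v) (k : Fin n)) := by
  have hu := ringGen_even n u
  have hv := ringGen_even n v
  have huv := even_circulant_mulVec hu hv
  rw [ringGen_natCast_of_even huv, Cmat_eq_circulant_of_even hu, Cmat_eq_circulant_of_even hv,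
    Cmat_eq_circulant_of_even huv, circulant_mul]

theorem ringGen_natCast_sub_natCast (w : ℕ → ℝ) (hh : 2 * h ≤ n) (hk : 2 * k ≤ n) :
    ringGen n w ((h : Fin n) - (k : Fin n)) = w (h - k : ℤ).natAbs := by
  wlog hkh : k ≤ h generalizing h k
  · rw [← neg_sub, ringGen_even, this hk hh (Nat.le_of_not_ge hkh), ← Int.natAbs_neg,
      neg_sub]
  rw [← Nat.cast_sub hkh, ringGen_natCast w (by lia)]
  congr 1
  lia

theorem ringGen_natCast_add_one_add_natCast (w : ℕ → ℝ) (hhk : h + 1 + k ≤ n) :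
    ringGen n w ((h : Fin n) + 1 + (k : Fin n)) = w (min (h + 1 + k) (n - (h + 1 + k))) := by
  rw [← ringGen_natCast w hhk, Nat.cast_add, Nat.cast_add_one]

theorem ringGen_add_one_add_le_ringGen_sub (hw : AntitoneOn w (Set.Iic (n / 2)))
    (hh : 2 * h + 1 ≤ n) (hk : 2 * k + 1 ≤ n) :
    ringGen n w ((h : Fin n) + 1 + (k : Fin n)) ≤ ringGen n w ((h : Fin n) - (k : Fin n)) := by
  rw [ringGen_natCast_add_one_add_natCast w (by lia),
    ringGen_natCast_sub_natCast w (by lia) (by lia)]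
  exact hw (Set.mem_Iic.mpr (by lia)) (Set.mem_Iic.mpr (by lia)) (by lia)

theorem ringGen_add_one_le (hw : AntitoneOn w (Set.Iic (n / 2))) (hk : 2 * k + 1 ≤ n) :
    ringGen n w ((k : Fin n) + 1) ≤ ringGen n w (k : Fin n) := by
  simpa using ringGen_add_one_add_le_ringGen_sub (k := 0) hw hk (by lia)

theorem ringGen_add_one_add_lt_ringGen_sub (hw : AntitoneOn w (Set.Iic (n / 2)))
    (hwi : w (i + 1) < w i) (hihk : i ≤ h + k) (hkhi : k ≤ h + i) (hhik : h ≤ i + k)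
    (hn : i + k + h + 2 ≤ n) :
    ringGen n w ((h : Fin n) + 1 + (k : Fin n)) < ringGen n w ((h : Fin n) - (k : Fin n)) := by
  rw [ringGen_natCast_add_one_add_natCast w (by lia),
    ringGen_natCast_sub_natCast w (by lia) (by lia)]
  calc w (min (h + 1 + k) (n - (h + 1 + k)))
      ≤ w (i + 1) := hw (Set.mem_Iic.mpr (by lia)) (Set.mem_Iic.mpr (by lia)) (by lia)
    _ < w i := hwi
    _ ≤ w (h - k : ℤ).natAbs := hw (Set.mem_Iic.mpr (by lia)) (Set.mem_Iic.mpr (by lia)) (by lia)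

theorem ringGen_add_one_lt (hw : AntitoneOn w (Set.Iic (n / 2))) (hwi : w (i + 1) < w i)
    (hi : 2 * i + 2 ≤ n) : ringGen n w ((i : Fin n) + 1) < ringGen n w (i : Fin n) := by
  simpa using ringGen_add_one_add_lt_ringGen_sub (h := i) (k := 0) hw hwi
    (by lia) (by lia) (by lia) (by lia)

theorem exists_natCast_eq_or_eq_neg_sub_one (t : Fin n) :
    ∃ k : ℕ, 2 * k + 1 ≤ n ∧ (t = (k : Fin n) ∨ t = -(k : Fin n) - 1) := by
  by_cases ht : 2 * t.val + 1 ≤ n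
  · exact ⟨t.val, ht, .inl (Fin.cast_val_eq_self t).symm⟩
  · refine ⟨n - (t.val + 1), by lia, .inr ?_⟩
    rw [Nat.cast_sub t.isLt, Fin.natCast_self, Nat.cast_succ, Fin.cast_val_eq_self]
    abel

theorem ringGen_sub_mul_ringGen_sub_nonneg {u v : ℕ → ℝ} (hu : AntitoneOn u (Set.Iic (n / 2)))
    (hv : AntitoneOn v (Set.Iic (n / 2))) (hh : 2 * h + 1 ≤ n) (t : Fin n) :
    0 ≤ (ringGen n u ((h : Fin n) - t) - ringGen n u ((h : Fin n) + 1 + t)) *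
      (ringGen n v t - ringGen n v (t + 1)) := by
  obtain ⟨k, hk, rfl | rfl⟩ := exists_natCast_eq_or_eq_neg_sub_one t
  all_goals
    have hU := ringGen_add_one_add_le_ringGen_sub hu hh hk
    have hV := ringGen_add_one_le hv hk
  · exact mul_nonneg (sub_nonneg.mpr hU) (sub_nonneg.mpr hV)
  · have hsub : (h : Fin n) - (-(k : Fin n) - 1) = h + 1 + k := by abel
    have hadd : (h : Fin n) + 1 + (-(k : Fin n) - 1) = h - k := by abel
    rw [even_sub_add_reflect (ringGen_even n v), hsub, hadd]
    exact mul_nonneg_of_nonpos_of_nonpos (sub_nonpos.mpr hU)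
      (neg_nonpos.mpr (sub_nonneg.mpr hV))

theorem circulant_ringGen_mulVec_ringGen_add_one_lt {u v : ℕ → ℝ} {j : ℕ}
    (hu : AntitoneOn u (Set.Iic (n / 2))) (hv : AntitoneOn v (Set.Iic (n / 2)))
    (hui : u (i + 1) < u i) (hvj : v (j + 1) < v j)
    (hihj : i ≤ h + j) (hjhi : j ≤ h + i) (hhij : h ≤ i + j) (hn : i + j + h + 2 ≤ n) :
    (circulant (ringGen n u) *ᵥ ringGen n v) ((h : Fin n) + 1) <
      (circulant (ringGen n u) *ᵥ ringGen n v) (h : Fin n) := by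
  rw [← sub_pos, ← mul_pos_iff_of_pos_left (zero_lt_two' ℝ),
    two_mul_circulant_mulVec_sub _ (ringGen_even n v)]
  refine sum_pos' (fun t _ ↦ ringGen_sub_mul_ringGen_sub_nonneg hu hv (by lia) t)
    ⟨(j : Fin n), mem_univ _, mul_pos (sub_pos.mpr ?_) (sub_pos.mpr ?_)⟩
  · exact ringGen_add_one_add_lt_ringGen_sub hu hui hihj hjhi hhij hn
  · exact ringGen_add_one_lt hv hvj (by lia)

theorem circulant_product_strict_chain_general {u v : ℕ → ℝ} {j : ℕ}
    (hu : AntitoneOn u (Set.Iic (n / 2))) (hv : AntitoneOn v (Set.Iic (n / 2)))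
    (hui : u (i + 1) < u i) (hvj : v (j + 1) < v j) :
    ∃ r : ℕ → ℝ,
      Cmat (ringGen n u) * Cmat (ringGen n v) = Cmat (ringGen n r) ∧
      ∀ h : ℕ, i ≤ h + j → j ≤ h + i → h ≤ i + j → i + j + h + 2 ≤ n → r (h + 1) < r h := by
  refine ⟨_, Cmat_ringGen_mul_Cmat_ringGen u v, fun h hihj hjhi hhij hn ↦ ?_⟩
  simpa only [Nat.cast_add_one] using
    circulant_ringGen_mulVec_ringGen_add_one_lt hu hv hui hvj hihj hjhi hhij hn

end RingGen

/-- Strict monotone chain in the generating entries of a product of monotone symmetric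
circulant matrices (odd size). -/
theorem circulant_product_strict_chain
    (s n : ℕ) (hs : 2 ≤ s) (hn : n = 2 * s - 1)
    (u v : ℕ → ℝ)
    (humono : ∀ k : ℕ, k + 1 ≤ s - 1 → u (k + 1) ≤ u k)
    (hvmono : ∀ k : ℕ, k + 1 ≤ s - 1 → v (k + 1) ≤ v k)
    (i j : ℕ) (hji : j ≤ i) (hi : i ≤ s - 2) (hj : j ≤ s - 2)
    (hui : u (i + 1) < u i) (hvj : v (j + 1) < v j) :
    ∃ r : ℕ → ℝ,
      Cmat (ringGen n u) * Cmat (ringGen n v) = Cmat (ringGen n r) ∧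
      ∀ h : ℕ, i - j ≤ h → h ≤ min (i + j) (2 * s - 3 - i - j) → r (h + 1) < r h := by
  have : NeZero n := ⟨by lia⟩
  have hsn : n / 2 = s - 1 := by lia
  obtain ⟨r, hr, hchain⟩ := circulant_product_strict_chain_general
    (antitoneOn_Iic_of_add_one_le (hsn ▸ humono)) (antitoneOn_Iic_of_add_one_le (hsn ▸ hvmono))
    hui hvj
  exact ⟨r, hr, fun h hlo hhi ↦ hchain h (by lia) (by lia) (by lia) (by lia)⟩
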